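/- arXiv:1803.09687 — 6 statements merged into one kernel-verified Lean document; each statement's English description precedes it below -/
import Mathlib

section
/- Let K ∈ ℝ, N ∈ (1,∞) and let a < b be real numbers; if K > 0 assume additionally that b − a ≤ π·√((N−1)/K). Let h be an MCP(K,N) density on (a,b). Then for all x₀, x₁ with a < x₀ ≤ x₁ < b the following two inequalities hold: h(x₁)·(s_{K/(N−1)}(b − x₀))^{N−1} ≥ h(x₀)·(s_{K/(N−1)}(b − x₁))^{N−1}, and h(x₀)·(s_{K/(N−1)}(x₁ − a))^{N−1} ≥ h(x₁)·(s_{K/(N−1)}(x₀ − a))^{N−1}. -/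
open Real MeasureTheory ENNReal

/-- The finite part of the distortion coefficient `σ_{K,N}^{(t)}(θ)`. -/
noncomputable def sigmaR (K N t θ : ℝ) : ℝ :=
  if 0 < K * θ ^ 2 then
    Real.sin (t * θ * Real.sqrt (K / N)) / Real.sin (θ * Real.sqrt (K / N))
  else if K * θ ^ 2 = 0 ∨ N = 0 then t
  else Real.sinh (t * θ * Real.sqrt (-K / N)) / Real.sinh (θ * Real.sqrt (-K / N))

/-- The distortion coefficient `σ_{K,N}^{(t)}(θ)`, with value `+∞` when `K·θ² ≥ N·π²`. -/
noncomputable def sigmaE (K N t θ : ℝ) : ℝ≥0∞ :=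
  if N * Real.pi ^ 2 ≤ K * θ ^ 2 then ⊤ else ENNReal.ofReal (sigmaR K N t θ)

/-- `h` is an `MCP(K,N)` density on the interval `I ⊆ ℝ`:  `h` is nonnegative on `I` and
`h(t·x₁ + (1−t)·x₀) ≥ (σ_{K,N−1}^{(1−t)}(|x₁ − x₀|))^{N−1} · h(x₀)` for all `x₀, x₁ ∈ I`,
`t ∈ [0,1]`.  The inequality is formulated in `ℝ≥0∞` so that an infinite coefficient forces
`h(x₀) = 0`. -/
def IsMCPDensity (K N : ℝ) (I : Set ℝ) (h : ℝ → ℝ) : Prop :=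
  (∀ x ∈ I, 0 ≤ h x) ∧
  ∀ x₀ ∈ I, ∀ x₁ ∈ I, ∀ t ∈ Set.Icc (0:ℝ) 1,
    sigmaE K (N - 1) (1 - t) |x₁ - x₀| ^ (N - 1) * ENNReal.ofReal (h x₀)
      ≤ ENNReal.ofReal (h (t * x₁ + (1 - t) * x₀))

/-- The function `s_κ`. -/
noncomputable def sk (κ θ : ℝ) : ℝ :=
  if 0 < κ then Real.sin (Real.sqrt κ * θ) / Real.sqrt κ
  else if κ = 0 then θ
  else Real.sinh (Real.sqrt (-κ) * θ) / Real.sqrt (-κ)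

/-- The derivative `s′_κ` of `s_κ`. -/
noncomputable def sk' (κ θ : ℝ) : ℝ :=
  if 0 < κ then Real.cos (Real.sqrt κ * θ)
  else if κ = 0 then 1
  else Real.cosh (Real.sqrt (-κ) * θ)

/-! Where the distortion coefficient is finite it equals `s_κ(tθ) / s_κ(θ)` with `κ = K / (N - 1)`.
Moving from `x` towards an interior point `z` and stopping at `y`, the density condition therefore
says that `h(x) s_κ(z - y) ^ (N - 1) ≤ h(y) s_κ(z - x) ^ (N - 1)`. Letting `z ↑ b` gives the first
bound, and reflecting the interval through the origin turns it into the second. -/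

open scoped Pointwise

section ModelFunction

variable {κ θ : ℝ}

lemma sk_of_pos (hκ : 0 < κ) (θ : ℝ) : sk κ θ = sin (√κ * θ) / √κ :=
  if_pos hκ

lemma sk_zero_left (θ : ℝ) : sk 0 θ = θ := by
  simp [sk]

lemma sk_of_neg (hκ : κ < 0) (θ : ℝ) : sk κ θ = sinh (√(-κ) * θ) / √(-κ) := by
  rw [sk, if_neg hκ.not_gt, if_neg hκ.ne]

lemma sk_zero_right (κ : ℝ) : sk κ 0 = 0 := by
  simp [sk]

lemma continuous_sk (κ : ℝ) : Continuous (sk κ) := by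
  unfold sk
  split_ifs <;> fun_prop

lemma sk_pos (hθ : 0 < θ) (hκθ : κ * θ ^ 2 < π ^ 2) : 0 < sk κ θ := by
  rcases lt_trichotomy κ 0 with hκ | rfl | hκ
  · have hroot : 0 < √(-κ) := sqrt_pos.2 (neg_pos.2 hκ)
    rw [sk_of_neg hκ]
    exact div_pos (sinh_pos_iff.2 (mul_pos hroot hθ)) hroot
  · rwa [sk_zero_left]
  · have hroot : 0 < √κ := sqrt_pos.2 hκ
    have hlt_pi : √κ * θ < π := by
      refine lt_of_pow_lt_pow_left₀ 2 pi_pos.le ?_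
      rwa [mul_pow, sq_sqrt hκ.le]
    rw [sk_of_pos hκ]
    exact div_pos (sin_pos_of_pos_of_lt_pi (mul_pos hroot hθ) hlt_pi) hroot

lemma sk_nonneg (hθ : 0 ≤ θ) (hκθ : κ * θ ^ 2 < π ^ 2) : 0 ≤ sk κ θ := by
  rcases hθ.eq_or_lt with rfl | hθ
  · rw [sk_zero_right]
  · exact (sk_pos hθ hκθ).le

end ModelFunction

section DistortionCoefficient

variable {K M θ : ℝ}

lemma sigmaR_eq_sk_div_sk (hM : 0 < M) (hθ : θ ≠ 0) (t : ℝ) :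
    sigmaR K M t θ = sk (K / M) (t * θ) / sk (K / M) θ := by
  have hθ_sq : 0 < θ ^ 2 := by positivity
  rcases lt_trichotomy K 0 with hK | rfl | hK
  · have hκ : K / M < 0 := div_neg_of_neg_of_pos hK hM
    have hKθ : K * θ ^ 2 < 0 := mul_neg_of_neg_of_pos hK hθ_sq
    have hroot : √(-(K / M)) ≠ 0 := (sqrt_pos.2 (neg_pos.2 hκ)).ne'
    rw [sigmaR, if_neg hKθ.not_gt, if_neg (not_or.2 ⟨hKθ.ne, hM.ne'⟩), sk_of_neg hκ, sk_of_neg hκ,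
      div_div_div_cancel_right₀ hroot, neg_div, mul_comm (t * θ), mul_comm θ]
  · simp [sigmaR, sk_zero_left, hθ]
  · have hκ : 0 < K / M := div_pos hK hM
    rw [sigmaR, if_pos (mul_pos hK hθ_sq), sk_of_pos hκ, sk_of_pos hκ,
      div_div_div_cancel_right₀ (sqrt_pos.2 hκ).ne', mul_comm (t * θ), mul_comm θ]

lemma sigmaE_eq_ofReal_sk_div_sk (hM : 0 < M) (hθ : θ ≠ 0) (hKθ : K * θ ^ 2 < M * π ^ 2) (t : ℝ) :
    sigmaE K M t θ = ENNReal.ofReal (sk (K / M) (t * θ) / sk (K / M) θ) := by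
  rw [sigmaE, if_neg hKθ.not_ge, sigmaR_eq_sk_div_sk hM hθ]

lemma mul_sq_le_mul_pi_sq_of_le_pi_mul_sqrt (hM : 0 ≤ M) (hθ : 0 ≤ θ)
    (hle : 0 < K → θ ≤ π * √(M / K)) : K * θ ^ 2 ≤ M * π ^ 2 := by
  rcases le_or_gt K 0 with hK | hK
  · exact (mul_nonpos_of_nonpos_of_nonneg hK (sq_nonneg θ)).trans (by positivity)
  · calc K * θ ^ 2 ≤ K * (π * √(M / K)) ^ 2 := by gcongr; exact hle hK
      _ = M * π ^ 2 := by rw [mul_pow, sq_sqrt (by positivity)]; field_simp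

lemma mul_sq_lt_of_lt_of_mul_sq_le {C η : ℝ} (hC : 0 < C) (hη : 0 ≤ η) (hηθ : η < θ)
    (hKθ : K * θ ^ 2 ≤ C) : K * η ^ 2 < C := by
  rcases le_or_gt K 0 with hK | hK
  · exact (mul_nonpos_of_nonpos_of_nonneg hK (sq_nonneg η)).trans_lt hC
  · exact lt_of_lt_of_le (by gcongr) hKθ

end DistortionCoefficient

namespace IsMCPDensity

variable {K N : ℝ} {I : Set ℝ} {h : ℝ → ℝ}

lemma comp_neg (hh : IsMCPDensity K N I h) : IsMCPDensity K N (-I) fun x ↦ h (-x) := by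
  refine ⟨fun x hx ↦ hh.1 (-x) hx, fun x₀ hx₀ x₁ hx₁ t ht ↦ ?_⟩
  have hle := hh.2 (-x₀) hx₀ (-x₁) hx₁ t ht
  rwa [neg_sub_neg, abs_sub_comm, mul_neg, mul_neg, ← neg_add] at hle

lemma mul_sk_rpow_le_mul_sk_rpow {x y z : ℝ} (hh : IsMCPDensity K N I h) (hN : 1 < N)
    (hI : I.OrdConnected) (hx : x ∈ I) (hz : z ∈ I) (hxy : x ≤ y) (hyz : y ≤ z)
    (hK : K * (z - x) ^ 2 < (N - 1) * π ^ 2) :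
    h x * sk (K / (N - 1)) (z - y) ^ (N - 1) ≤ h y * sk (K / (N - 1)) (z - x) ^ (N - 1) := by
  rcases (hxy.trans hyz).eq_or_lt with rfl | hxz
  · rw [hxy.antisymm hyz]
  have hM : 0 < N - 1 := sub_pos.2 hN
  have hθ : 0 < z - x := sub_pos.2 hxz
  have hy_nonneg : 0 ≤ h y := hh.1 y (hI.out hx hz ⟨hxy, hyz⟩)
  have hsk_x : 0 < sk (K / (N - 1)) (z - x) := by
    apply sk_pos hθ
    rwa [div_mul_eq_mul_div, div_lt_iff₀' hM]
  have hsk_y : 0 ≤ sk (K / (N - 1)) (z - y) := by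
    rcases hxy.eq_or_lt with rfl | hxy
    · exact hsk_x.le
    apply sk_nonneg (sub_nonneg.2 hyz)
    rw [div_mul_eq_mul_div, div_lt_iff₀' hM]
    exact mul_sq_lt_of_lt_of_mul_sq_le (by positivity) (sub_nonneg.2 hyz) (by linarith) hK.le
  obtain ⟨t, ht, hty⟩ : ∃ t ∈ Set.Icc (0 : ℝ) 1, t * z + (1 - t) * x = y :=
    ⟨(y - x) / (z - x), ⟨div_nonneg (by linarith) hθ.le, (div_le_one hθ).2 (by linarith)⟩,
      by field_simp; ring⟩
  have hratio : (sk (K / (N - 1)) (z - y) / sk (K / (N - 1)) (z - x)) ^ (N - 1) * h x ≤ h y := by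
    have hle := hh.2 x hx z hz t ht
    have hscale : (1 - t) * (z - x) = z - y := by linarith
    rwa [hty, abs_of_pos hθ, sigmaE_eq_ofReal_sk_div_sk hM hθ.ne' hK, hscale,
      ENNReal.ofReal_rpow_of_nonneg (by positivity) hM.le, ← ENNReal.ofReal_mul (by positivity),
      ENNReal.ofReal_le_ofReal_iff hy_nonneg] at hle
  rwa [div_rpow hsk_y hsk_x.le, div_mul_eq_mul_div, div_le_iff₀ (rpow_pos_of_pos hsk_x _),
    mul_comm _ (h x)] at hratio

lemma mul_sk_rpow_le_mul_sk_rpow_right_end {a b x₀ x₁ : ℝ}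
    (hh : IsMCPDensity K N (Set.Ioo a b) h) (hN : 1 < N)
    (hK : K * (b - x₀) ^ 2 ≤ (N - 1) * π ^ 2) (hx₀ : a < x₀) (hx : x₀ ≤ x₁) (hx₁ : x₁ < b) :
    h x₀ * sk (K / (N - 1)) (b - x₁) ^ (N - 1) ≤ h x₁ * sk (K / (N - 1)) (b - x₀) ^ (N - 1) := by
  have hM : 0 < N - 1 := sub_pos.2 hN
  have hcont (c y : ℝ) : Continuous fun z ↦ c * sk (K / (N - 1)) (z - y) ^ (N - 1) :=
    continuous_const.mul (((continuous_sk _).comp (continuous_sub_right y)).rpow_const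
      fun _ ↦ Or.inr hM.le)
  refine le_of_tendsto_of_tendsto (b := nhdsWithin b (Set.Iio b))
    (hcont (h x₀) x₁).continuousWithinAt (hcont (h x₁) x₀).continuousWithinAt ?_
  filter_upwards [Ioo_mem_nhdsLT hx₁] with z ⟨hx₁z, hzb⟩
  have hKz : K * (z - x₀) ^ 2 < (N - 1) * π ^ 2 :=
    mul_sq_lt_of_lt_of_mul_sq_le (by positivity) (by linarith) (sub_lt_sub_right hzb x₀) hK
  exact hh.mul_sk_rpow_le_mul_sk_rpow hN Set.ordConnected_Ioo ⟨hx₀, hx.trans_lt hx₁⟩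
    ⟨hx₀.trans (hx.trans_lt hx₁z), hzb⟩ hx hx₁z.le hKz

end IsMCPDensity

theorem mcp_density_two_sided_bound
    (K N a b : ℝ) (hN : 1 < N) (hab : a < b)
    (hK : 0 < K → b - a ≤ Real.pi * Real.sqrt ((N - 1) / K))
    (h : ℝ → ℝ) (hh : IsMCPDensity K N (Set.Ioo a b) h) :
    ∀ x₀ x₁ : ℝ, a < x₀ → x₀ ≤ x₁ → x₁ < b →
      h x₀ * sk (K / (N - 1)) (b - x₁) ^ (N - 1)
          ≤ h x₁ * sk (K / (N - 1)) (b - x₀) ^ (N - 1) ∧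
      h x₁ * sk (K / (N - 1)) (x₀ - a) ^ (N - 1)
          ≤ h x₀ * sk (K / (N - 1)) (x₁ - a) ^ (N - 1) := by
  intro x₀ x₁ hx₀ hx hx₁
  have hdiam {θ : ℝ} (hθ : 0 ≤ θ) (hθ_le : θ ≤ b - a) : K * θ ^ 2 ≤ (N - 1) * π ^ 2 :=
    mul_sq_le_mul_pi_sq_of_le_pi_mul_sqrt (sub_nonneg.2 hN.le) hθ fun hK_pos ↦
      hθ_le.trans (hK hK_pos)
  constructor
  · exact hh.mul_sk_rpow_le_mul_sk_rpow_right_end hN (hdiam (by linarith) (by linarith)) hx₀ hx hx₁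
  · have hh_neg : IsMCPDensity K N (Set.Ioo (-b) (-a)) fun x ↦ h (-x) := by
      simpa only [Set.neg_Ioo] using hh.comp_neg
    have hK_neg : K * (-a - -x₁) ^ 2 ≤ (N - 1) * π ^ 2 := hdiam (by linarith) (by linarith)
    simpa only [neg_neg, neg_sub_neg] using hh_neg.mul_sk_rpow_le_mul_sk_rpow_right_end hN hK_neg
      (neg_lt_neg hx₁) (neg_le_neg hx) (neg_lt_neg hx₀)
end

section
/- Let K ∈ ℝ, N ∈ (1,∞), let a < b be finite real numbers, and let h be an MCP(K,N) density on the interval (a,b) with ∫_a^b h(x) dx = 1. Then: if K ≥ 0, sup_{x ∈ (a,b)} h(x) ≤ N/(b−a); and if K < 0, sup_{x ∈ (a,b)} h(x) ≤ (b−a)^{−1} · (∫_0^1 (σ_{K,N−1}^{(t)}(b−a))^{N−1} dt)^{−1}. -/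
open Real MeasureTheory ENNReal

/-!
For `K ≥ 0` an `MCP(K, N)` density is an `MCP(0, N)` density, because `t ≤ σ_{K,N-1}^{(t)}`; so
only `K ≤ 0` matters. There `σ_{K,N-1}^{(t)}(θ)` decreases in `θ`, hence along every segment from
a point `v` of the interval to `x` the density dominates the profile `σ_{K,N-1}^{(t)}(b - a)^(N-1)`
times `h x`, independently of `v`. Continuity of the profile in `t` extends this to `v = a` and
`v = b`. Integrating over the two segments joining `x` to the endpoints gives
`(b - a) * ∫₀¹ σ_{K,N-1}^{(t)}(b - a)^(N-1) dt * h x ≤ ∫ h`.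
-/

/-! ### Hyperbolic and trigonometric inequalities -/

lemma convexOn_sinh_Ici : ConvexOn ℝ (Set.Ici 0) Real.sinh := by
  refine MonotoneOn.convexOn_of_deriv (convex_Ici 0) Real.continuous_sinh.continuousOn
    Real.differentiable_sinh.differentiableOn ?_
  rw [Real.deriv_sinh]
  exact Real.cosh_strictMonoOn.monotoneOn.mono interior_subset

lemma sinh_mul_le_mul_sinh {t x : ℝ} (ht : t ∈ Set.Icc (0 : ℝ) 1) (hx : 0 ≤ x) :
    Real.sinh (t * x) ≤ t * Real.sinh x := by
  simpa using convexOn_sinh_Ici.2 Set.self_mem_Ici (Set.mem_Ici.2 hx)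
    (sub_nonneg.2 ht.2) ht.1 (sub_add_cancel 1 t)

lemma mul_sin_le_sin_mul {t x : ℝ} (ht : t ∈ Set.Icc (0 : ℝ) 1) (hx : x ∈ Set.Icc 0 π) :
    t * Real.sin x ≤ Real.sin (t * x) := by
  simpa using strictConcaveOn_sin_Icc.concaveOn.2 (Set.left_mem_Icc.2 pi_pos.le) hx
    (sub_nonneg.2 ht.2) ht.1 (sub_add_cancel 1 t)

-- After the addition formulas this is `(1 + t) sinh((1 - t) x) ≤ (1 - t) sinh((1 + t) x)`.
lemma mul_cosh_mul_sinh_le_sinh_mul_cosh {t x : ℝ} (ht : t ∈ Set.Icc (0 : ℝ) 1) (hx : 0 ≤ x) :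
    t * Real.cosh (t * x) * Real.sinh x ≤ Real.sinh (t * x) * Real.cosh x := by
  have ht_pos : 0 < 1 + t := by linarith [ht.1]
  have ht_ratio : (1 - t) / (1 + t) ∈ Set.Icc (0 : ℝ) 1 :=
    ⟨div_nonneg (sub_nonneg.2 ht.2) ht_pos.le, (div_le_one ht_pos).2 (by linarith [ht.1])⟩
  have hconv := sinh_mul_le_mul_sinh ht_ratio (x := x + t * x)
    (add_nonneg hx (mul_nonneg ht.1 hx))
  have harg : (1 - t) / (1 + t) * (x + t * x) = x - t * x := by field_simp
  rw [harg, div_mul_eq_mul_div, le_div_iff₀ ht_pos, Real.sinh_sub, Real.sinh_add] at hconv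
  linarith

lemma antitoneOn_sinh_mul_div_sinh {t : ℝ} (ht : t ∈ Set.Icc (0 : ℝ) 1) :
    AntitoneOn (fun x => Real.sinh (t * x) / Real.sinh x) (Set.Ioi 0) := by
  have hderiv (x : ℝ) (hx : x ∈ Set.Ioi 0) :
      HasDerivAt (fun x => Real.sinh (t * x) / Real.sinh x)
        ((Real.cosh (t * x) * t * Real.sinh x - Real.sinh (t * x) * Real.cosh x)
          / Real.sinh x ^ 2) x :=
    (hasDerivAt_const_mul t).sinh.div (Real.hasDerivAt_sinh x) (Real.sinh_pos_iff.2 hx).ne'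
  refine antitoneOn_of_deriv_nonpos (convex_Ioi 0)
    (fun x hx => (hderiv x hx).continuousAt.continuousWithinAt)
    (fun x hx => (hderiv x (interior_subset hx)).differentiableAt.differentiableWithinAt)
    fun x hx => ?_
  have hx_pos : x ∈ Set.Ioi 0 := interior_subset hx
  rw [(hderiv x hx_pos).deriv]
  refine div_nonpos_of_nonpos_of_nonneg ?_ (sq_nonneg _)
  linarith [mul_cosh_mul_sinh_le_sinh_mul_cosh ht (le_of_lt hx_pos)]

/-- The ratio `sinh (t x) / sinh x`, with its limit `t` as the value at `x = 0`. For `K ≤ 0` every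
distortion coefficient is of this form, with `x = θ √(-K / N)`. -/
noncomputable def sinhRatio (t x : ℝ) : ℝ :=
  if x = 0 then t else Real.sinh (t * x) / Real.sinh x

lemma sinhRatio_pos {t x : ℝ} (ht : 0 < t) (hx : 0 ≤ x) : 0 < sinhRatio t x := by
  rcases hx.eq_or_lt' with rfl | hx_pos
  · simpa [sinhRatio] using ht
  · rw [sinhRatio, if_neg hx_pos.ne']
    exact div_pos (Real.sinh_pos_iff.2 (mul_pos ht hx_pos)) (Real.sinh_pos_iff.2 hx_pos)

lemma continuous_sinhRatio (x : ℝ) : Continuous fun t => sinhRatio t x := by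
  unfold sinhRatio
  split_ifs <;> fun_prop

lemma antitoneOn_sinhRatio {t : ℝ} (ht : t ∈ Set.Icc (0 : ℝ) 1) :
    AntitoneOn (sinhRatio t) (Set.Ici 0) := by
  intro x hx y hy hxy
  rcases (Set.mem_Ici.1 hx).eq_or_lt' with rfl | hx_pos
  · rcases hxy.eq_or_lt' with rfl | hy_pos
    · exact le_rfl
    · rw [sinhRatio, sinhRatio, if_neg hy_pos.ne', if_pos rfl,
        div_le_iff₀ (Real.sinh_pos_iff.2 hy_pos)]
      exact sinh_mul_le_mul_sinh ht hy
  · have hy_pos : 0 < y := hx_pos.trans_le hxy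
    rw [sinhRatio, sinhRatio, if_neg hy_pos.ne', if_neg hx_pos.ne']
    exact antitoneOn_sinh_mul_div_sinh ht hx_pos hy_pos hxy

/-! ### Distortion coefficients -/

section Distortion

variable {K N t θ : ℝ}

lemma sigmaR_zero_left (N t θ : ℝ) : sigmaR 0 N t θ = t := by
  simp [sigmaR]

lemma ofReal_sigmaR_le_sigmaE (K N t θ : ℝ) :
    ENNReal.ofReal (sigmaR K N t θ) ≤ sigmaE K N t θ := by
  unfold sigmaE
  split_ifs
  exacts [le_top, le_rfl]

lemma le_sigmaR_of_nonneg (hK : 0 ≤ K) (ht : t ∈ Set.Icc (0 : ℝ) 1) (hθ : 0 ≤ θ)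
    (hlt : K * θ ^ 2 < N * π ^ 2) : t ≤ sigmaR K N t θ := by
  have hKθ : 0 ≤ K * θ ^ 2 := by positivity
  rcases hKθ.eq_or_lt' with hKθ_zero | hKθ_pos
  · simp [sigmaR, hKθ_zero]
  have hN : 0 < N := pos_of_mul_pos_left (hKθ.trans_lt hlt) (sq_nonneg π)
  have hsq : (θ * √(K / N)) ^ 2 = K * θ ^ 2 / N := by
    rw [mul_pow, Real.sq_sqrt (by positivity)]
    ring
  have harg_nonneg : 0 ≤ θ * √(K / N) := by positivity
  have harg_pos : 0 < θ * √(K / N) := by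
    refine lt_of_pow_lt_pow_left₀ 2 harg_nonneg ?_
    rw [hsq, zero_pow two_ne_zero]
    positivity
  have harg_lt : θ * √(K / N) < π := by
    refine lt_of_pow_lt_pow_left₀ 2 pi_pos.le ?_
    rwa [hsq, div_lt_iff₀' hN]
  rw [sigmaR, if_pos hKθ_pos, mul_assoc, le_div_iff₀ (sin_pos_of_pos_of_lt_pi harg_pos harg_lt)]
  exact mul_sin_le_sin_mul ht ⟨harg_nonneg, harg_lt.le⟩

lemma sigmaE_zero_left_le (hK : 0 ≤ K) (ht : t ∈ Set.Icc (0 : ℝ) 1) (hθ : 0 ≤ θ) :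
    sigmaE 0 N t θ ≤ sigmaE K N t θ := by
  by_cases hle : N * π ^ 2 ≤ K * θ ^ 2
  · simp [sigmaE, hle]
  · have hKθ : 0 ≤ K * θ ^ 2 := by positivity
    rw [sigmaE, sigmaE, if_neg hle, if_neg (by linarith), sigmaR_zero_left]
    exact ENNReal.ofReal_le_ofReal (le_sigmaR_of_nonneg hK ht hθ (not_le.1 hle))

lemma sigmaR_eq_sinhRatio (hK : K ≤ 0) (hN : 0 ≤ N) (t θ : ℝ) :
    sigmaR K N t θ = sinhRatio t (θ * √(-K / N)) := by
  have hKθ : ¬ 0 < K * θ ^ 2 := (mul_nonpos_of_nonpos_of_nonneg hK (sq_nonneg θ)).not_gt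
  have harg : θ * √(-K / N) = 0 ↔ K * θ ^ 2 = 0 ∨ N = 0 := by
    rw [mul_eq_zero, Real.sqrt_eq_zero (div_nonneg (neg_nonneg.2 hK) hN), _root_.div_eq_zero_iff,
      neg_eq_zero, mul_eq_zero, sq_eq_zero_iff]
    tauto
  simp only [sigmaR, sinhRatio, hKθ, harg, if_false, mul_assoc]

lemma sigmaR_pos (hK : K ≤ 0) (hN : 0 ≤ N) (ht : 0 < t) (hθ : 0 ≤ θ) : 0 < sigmaR K N t θ := by
  rw [sigmaR_eq_sinhRatio hK hN]
  exact sinhRatio_pos ht (by positivity)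

lemma antitoneOn_sigmaR (hK : K ≤ 0) (hN : 0 ≤ N) (ht : t ∈ Set.Icc (0 : ℝ) 1) :
    AntitoneOn (sigmaR K N t) (Set.Ici 0) := by
  intro θ hθ θ' hθ' hle
  rw [Set.mem_Ici] at hθ hθ'
  rw [sigmaR_eq_sinhRatio hK hN, sigmaR_eq_sinhRatio hK hN]
  exact antitoneOn_sinhRatio ht (Set.mem_Ici.2 (by positivity)) (Set.mem_Ici.2 (by positivity))
    (by gcongr)

lemma continuous_sigmaR_rpow (hK : K ≤ 0) (hN : 0 ≤ N) {p : ℝ} (hp : 0 ≤ p) (θ : ℝ) :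
    Continuous fun t => sigmaR K N t θ ^ p := by
  simp_rw [sigmaR_eq_sinhRatio hK hN]
  exact (continuous_sinhRatio _).rpow_const fun _ => Or.inr hp

lemma integral_sigmaR_rpow_pos (hK : K ≤ 0) (hN : 0 ≤ N) {p : ℝ} (hp : 0 ≤ p) (hθ : 0 ≤ θ) :
    0 < ∫ t in (0 : ℝ)..1, sigmaR K N t θ ^ p :=
  intervalIntegral.intervalIntegral_pos_of_pos_on
    ((continuous_sigmaR_rpow hK hN hp θ).intervalIntegrable 0 1)
    (fun _ ht => Real.rpow_pos_of_pos (sigmaR_pos hK hN ht.1 hθ) p) one_pos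

lemma integral_sigmaR_zero_left_rpow {p : ℝ} (hp : -1 < p) (N θ : ℝ) :
    ∫ t in (0 : ℝ)..1, sigmaR 0 N t θ ^ p = 1 / (p + 1) := by
  simp_rw [sigmaR_zero_left]
  rw [integral_rpow (Or.inl hp), Real.one_rpow, Real.zero_rpow (by linarith), sub_zero]

end Distortion

/-! ### Functions dominating a profile along segments -/

lemma le_apply_lineMap_of_mem_closure {E : Type*} [AddCommGroup E] [Module ℝ E]
    [TopologicalSpace E] [IsTopologicalAddGroup E] [ContinuousConstSMul ℝ E]
    {s : Set E} (hs : Convex ℝ s) {f : E → ℝ} {φ : ℝ → ℝ} {x v : E}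
    (hx : x ∈ interior s) (hv : v ∈ closure s)
    (hφf : ∀ w ∈ s, ∀ t ∈ Set.Ioo (0 : ℝ) 1, φ t ≤ f (AffineMap.lineMap w x t))
    {t : ℝ} (ht : t ∈ Set.Ioo (0 : ℝ) 1) (hφ : ContinuousAt φ t) :
    φ t ≤ f (AffineMap.lineMap v x t) := by
  refine le_of_tendsto (hφ.continuousWithinAt (s := Set.Iio t)) ?_
  filter_upwards [Ioo_mem_nhdsLT ht.1] with r hr
  have h_one_sub_pos : 0 < 1 - r := by linarith [hr.2, ht.2]
  -- The segment from `lineMap v x q` to `x` meets `lineMap v x t` at the earlier time `r < t`.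
  set q := (t - r) / (1 - r)
  have hq : q ∈ Set.Ioo (0 : ℝ) 1 :=
    ⟨div_pos (sub_pos.2 hr.2) h_one_sub_pos, (div_lt_one h_one_sub_pos).2 (by linarith [ht.2])⟩
  have hw : AffineMap.lineMap v x q ∈ s := interior_subset <|
    hs.openSegment_closure_interior_subset_interior hv hx (lineMap_mem_openSegment ℝ v x hq)
  have hsame : AffineMap.lineMap (AffineMap.lineMap v x q) x r = AffineMap.lineMap v x t := by
    rw [AffineMap.lineMap_lineMap_left]
    congr 1
    simp only [q]
    field_simp
    ring
  rw [← hsame]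
  exact hφf _ hw r ⟨hr.1, by linarith⟩

lemma sub_smul_integral_comp_lineMap {E : Type*} [NormedAddCommGroup E] [NormedSpace ℝ E]
    (f : ℝ → E) (v x : ℝ) :
    (x - v) • ∫ t in (0 : ℝ)..1, f (AffineMap.lineMap v x t) = ∫ y in v..x, f y := by
  simp [AffineMap.lineMap_apply_ring', mul_comm _ (x - v)]

lemma intervalIntegrable_comp_lineMap {E : Type*} [NormedAddCommGroup E] {f : ℝ → E} {v x : ℝ}
    (hf : IntervalIntegrable f volume v x) :
    IntervalIntegrable (fun t => f (AffineMap.lineMap v x t)) volume 0 1 := by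
  rcases eq_or_ne v x with rfl | hne
  · simp
  · simpa [AffineMap.lineMap_apply_ring', div_self (sub_ne_zero.2 hne.symm)] using
      (hf.comp_add_right v).comp_mul_right (c := x - v)

lemma sub_mul_integral_le_integral_of_le_lineMap {f φ : ℝ → ℝ} {a b x : ℝ}
    (hx : x ∈ Set.Icc a b) (hf : IntervalIntegrable f volume a b)
    (hφ : IntervalIntegrable φ volume 0 1)
    (hleft : ∀ t ∈ Set.Ioo (0 : ℝ) 1, φ t ≤ f (AffineMap.lineMap a x t))
    (hright : ∀ t ∈ Set.Ioo (0 : ℝ) 1, φ t ≤ f (AffineMap.lineMap b x t)) :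
    (b - a) * ∫ t in (0 : ℝ)..1, φ t ≤ ∫ y in a..b, f y := by
  have hx_uIcc : x ∈ Set.uIcc a b := Set.Icc_subset_uIcc hx
  have hf_left : IntervalIntegrable f volume a x :=
    hf.mono_set (Set.uIcc_subset_uIcc_left hx_uIcc)
  have hf_right : IntervalIntegrable f volume x b :=
    hf.mono_set (Set.uIcc_subset_uIcc_right hx_uIcc)
  have hmean_left : ∫ t in (0 : ℝ)..1, φ t ≤ ∫ t in (0 : ℝ)..1, f (AffineMap.lineMap a x t) :=
    intervalIntegral.integral_mono_on_of_le_Ioo zero_le_one hφ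
      (intervalIntegrable_comp_lineMap hf_left) hleft
  have hmean_right : ∫ t in (0 : ℝ)..1, φ t ≤ ∫ t in (0 : ℝ)..1, f (AffineMap.lineMap b x t) :=
    intervalIntegral.integral_mono_on_of_le_Ioo zero_le_one hφ
      (intervalIntegrable_comp_lineMap hf_right.symm) hright
  calc (b - a) * ∫ t in (0 : ℝ)..1, φ t
      = (x - a) * (∫ t in (0 : ℝ)..1, φ t) + (b - x) * ∫ t in (0 : ℝ)..1, φ t := by ring
    _ ≤ (x - a) * (∫ t in (0 : ℝ)..1, f (AffineMap.lineMap a x t))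
        + (b - x) * ∫ t in (0 : ℝ)..1, f (AffineMap.lineMap b x t) :=
      add_le_add (mul_le_mul_of_nonneg_left hmean_left (sub_nonneg.2 hx.1))
        (mul_le_mul_of_nonneg_left hmean_right (sub_nonneg.2 hx.2))
    _ = (∫ y in a..x, f y) + ∫ y in x..b, f y := by
      rw [intervalIntegral.integral_symm b x, ← sub_smul_integral_comp_lineMap f a x,
        ← sub_smul_integral_comp_lineMap f b x, ← neg_smul, neg_sub, smul_eq_mul, smul_eq_mul]
    _ = ∫ y in a..b, f y := intervalIntegral.integral_add_adjacent_intervals hf_left hf_right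

/-! ### Bounds for MCP densities -/

namespace IsMCPDensity

variable {K N : ℝ} {h : ℝ → ℝ}

lemma zero_of_nonneg {I : Set ℝ} (hh : IsMCPDensity K N I h) (hK : 0 ≤ K) (hN : 1 ≤ N) :
    IsMCPDensity 0 N I h := by
  refine ⟨hh.1, fun x₀ hx₀ x₁ hx₁ t ht => le_trans ?_ (hh.2 x₀ hx₀ x₁ hx₁ t ht)⟩
  have ht_symm : 1 - t ∈ Set.Icc (0 : ℝ) 1 := ⟨by linarith [ht.2], by linarith [ht.1]⟩
  exact mul_le_mul'
    (ENNReal.rpow_le_rpow (sigmaE_zero_left_le hK ht_symm (abs_nonneg _)) (sub_nonneg.2 hN)) le_rfl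

lemma sigmaR_rpow_mul_le {I : Set ℝ} (hh : IsMCPDensity K N I h) (hI : Convex ℝ I) (hK : K ≤ 0)
    (hN : 1 ≤ N) {x v : ℝ} (hx : x ∈ I) (hv : v ∈ I) {t : ℝ} (ht : t ∈ Set.Ioo (0 : ℝ) 1) :
    sigmaR K (N - 1) t |v - x| ^ (N - 1) * h x ≤ h (AffineMap.lineMap v x t) := by
  have hN' : 0 ≤ N - 1 := sub_nonneg.2 hN
  have hσ : 0 ≤ sigmaR K (N - 1) t |v - x| := (sigmaR_pos hK hN' ht.1 (abs_nonneg _)).le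
  have hmem : AffineMap.lineMap v x t ∈ I := hI.lineMap_mem hv hx (Set.Ioo_subset_Icc_self ht)
  refine (ENNReal.ofReal_le_ofReal_iff (hh.1 _ hmem)).1 ?_
  calc ENNReal.ofReal (sigmaR K (N - 1) t |v - x| ^ (N - 1) * h x)
      = ENNReal.ofReal (sigmaR K (N - 1) t |v - x|) ^ (N - 1) * ENNReal.ofReal (h x) := by
        rw [ENNReal.ofReal_mul (by positivity), ENNReal.ofReal_rpow_of_nonneg hσ hN']
    _ ≤ sigmaE K (N - 1) t |v - x| ^ (N - 1) * ENNReal.ofReal (h x) := by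
        gcongr
        exact ofReal_sigmaR_le_sigmaE K (N - 1) t |v - x|
    _ ≤ ENNReal.ofReal (h (AffineMap.lineMap v x t)) := by
        simpa [AffineMap.lineMap_apply_ring] using
          hh.2 x hx v hv (1 - t) ⟨by linarith [ht.2], by linarith [ht.1]⟩

variable {a b : ℝ}

lemma sigmaR_sub_rpow_mul_le (hh : IsMCPDensity K N (Set.Ioo a b) h) (hK : K ≤ 0) (hN : 1 ≤ N)
    {x v : ℝ} (hx : x ∈ Set.Ioo a b) (hv : v ∈ Set.Icc a b) {t : ℝ}
    (ht : t ∈ Set.Ioo (0 : ℝ) 1) :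
    sigmaR K (N - 1) t (b - a) ^ (N - 1) * h x ≤ h (AffineMap.lineMap v x t) := by
  have hab : a < b := hx.1.trans hx.2
  have hN' : 0 ≤ N - 1 := sub_nonneg.2 hN
  refine le_apply_lineMap_of_mem_closure (convex_Ioo a b)
    (φ := fun t => sigmaR K (N - 1) t (b - a) ^ (N - 1) * h x)
    (by rwa [interior_Ioo]) (by rwa [closure_Ioo hab.ne]) (fun w hw r hr => ?_) ht
    ((continuous_sigmaR_rpow hK hN' hN' _).mul_const _).continuousAt
  have hdist : |w - x| ≤ b - a := by
    rw [abs_le]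
    constructor <;> linarith [hx.1, hx.2, hw.1, hw.2]
  have hσ_le : sigmaR K (N - 1) r (b - a) ≤ sigmaR K (N - 1) r |w - x| :=
    antitoneOn_sigmaR hK hN' (Set.Ioo_subset_Icc_self hr)
      (Set.mem_Ici.2 (abs_nonneg _)) (Set.mem_Ici.2 (sub_nonneg.2 hab.le)) hdist
  have hσ_pos := sigmaR_pos hK hN' hr.1 (sub_nonneg.2 hab.le)
  have hh_nonneg : 0 ≤ h x := hh.1 x hx
  calc sigmaR K (N - 1) r (b - a) ^ (N - 1) * h x
      ≤ sigmaR K (N - 1) r |w - x| ^ (N - 1) * h x := by gcongr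
    _ ≤ h (AffineMap.lineMap w x r) :=
      hh.sigmaR_rpow_mul_le (convex_Ioo a b) hK hN hx hw hr

lemma le_mul_integral_of_nonpos (hh : IsMCPDensity K N (Set.Ioo a b) h) (hK : K ≤ 0) (hN : 1 ≤ N)
    (hint : IntegrableOn h (Set.Ioo a b)) {x : ℝ} (hx : x ∈ Set.Ioo a b) :
    h x ≤ (b - a)⁻¹ * (∫ t in (0 : ℝ)..1, sigmaR K (N - 1) t (b - a) ^ (N - 1))⁻¹ *
      ∫ y in Set.Ioo a b, h y := by
  have hab : a < b := hx.1.trans hx.2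
  have hN' : 0 ≤ N - 1 := sub_nonneg.2 hN
  have hmean_pos := integral_sigmaR_rpow_pos hK hN' hN' (sub_nonneg.2 hab.le)
  have hmass := sub_mul_integral_le_integral_of_le_lineMap (Set.Ioo_subset_Icc_self hx)
    ((intervalIntegrable_iff_integrableOn_Ioo_of_le hab.le).2 hint)
    (((continuous_sigmaR_rpow hK hN' hN' (b - a)).mul_const (h x)).intervalIntegrable 0 1)
    (fun t ht => hh.sigmaR_sub_rpow_mul_le hK hN hx (Set.left_mem_Icc.2 hab.le) ht)
    (fun t ht => hh.sigmaR_sub_rpow_mul_le hK hN hx (Set.right_mem_Icc.2 hab.le) ht)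
  rw [intervalIntegral.integral_mul_const, ← mul_assoc, intervalIntegral.integral_of_le hab.le,
    integral_Ioc_eq_integral_Ioo] at hmass
  rw [← mul_inv, le_inv_mul_iff₀ (mul_pos (sub_pos.2 hab) hmean_pos)]
  exact hmass

lemma le_mul_integral_of_nonneg (hh : IsMCPDensity K N (Set.Ioo a b) h) (hK : 0 ≤ K) (hN : 1 ≤ N)
    (hint : IntegrableOn h (Set.Ioo a b)) {x : ℝ} (hx : x ∈ Set.Ioo a b) :
    h x ≤ N / (b - a) * ∫ y in Set.Ioo a b, h y := by
  have hbound := (hh.zero_of_nonneg hK hN).le_mul_integral_of_nonpos le_rfl hN hint hx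
  rwa [integral_sigmaR_zero_left_rpow (by linarith), sub_add_cancel, one_div, inv_inv,
    inv_mul_eq_div] at hbound

end IsMCPDensity

theorem mcp_density_sup_bound
    (K N a b : ℝ) (hN : 1 < N) (hab : a < b)
    (h : ℝ → ℝ) (hh : IsMCPDensity K N (Set.Ioo a b) h)
    (hint : ∫ x in Set.Ioo a b, h x = 1) :
    (0 ≤ K → ∀ x ∈ Set.Ioo a b, h x ≤ N / (b - a)) ∧
    (K < 0 → ∀ x ∈ Set.Ioo a b,
      h x ≤ (b - a)⁻¹ * (∫ t in (0:ℝ)..1, sigmaR K (N - 1) t (b - a) ^ (N - 1))⁻¹) := by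
  have hint' : IntegrableOn h (Set.Ioo a b) :=
    Integrable.of_integral_ne_zero (by rw [hint]; exact one_ne_zero)
  constructor
  · intro hK x hx
    simpa [hint] using hh.le_mul_integral_of_nonneg hK hN.le hint' hx
  · intro hK x hx
    simpa [hint] using hh.le_mul_integral_of_nonpos hK.le hN.le hint' hx
end

section
/- Let N ∈ (1,∞) and let h : ℝ → [0,∞) satisfy h(t·x₁ + (1−t)·x₀) ≥ (1−t)^{N−1}·h(x₀) for all x₀, x₁ ∈ ℝ and all t ∈ [0,1] (i.e. h is an MCP(0,N) density on the whole real line). Then h is constant on ℝ. -/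
/-!
Since `h` lives on the whole line, any target `y` lies on a segment issuing from `x` at an
arbitrarily small parameter `t > 0`: extrapolate the far endpoint to `x + t⁻¹ (y - x)`.
The inequality then reads `(1 - t) ^ (N - 1) * h x ≤ h y`, and `t → 0` gives `h x ≤ h y`.
-/

open AffineMap Filter Set Topology

section Extrapolation

variable {𝕜 V P : Type*} [DivisionRing 𝕜] [AddCommGroup V] [Module 𝕜 V] [AddTorsor V P]

theorem lineMap_lineMap_inv_self (x y : P) {t : 𝕜} (ht : t ≠ 0) :
    lineMap x (lineMap x y t⁻¹) t = y := by
  rw [lineMap_lineMap_right, mul_inv_cancel₀ ht, lineMap_apply_one]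

theorem le_of_eventually_mul_le_lineMap {R : Type*} [TopologicalSpace R] [Preorder R]
    [ClosedIicTopology R] [MulOneClass R] [SeparatelyContinuousMul R] {l : Filter 𝕜} [l.NeBot]
    {w : 𝕜 → R} {h : P → R} (hl : ∀ᶠ t in l, t ≠ 0) (hw : Tendsto w l (𝓝 1))
    (hwh : ∀ᶠ t in l, ∀ x₀ x₁ : P, w t * h x₀ ≤ h (lineMap x₀ x₁ t)) (x y : P) :
    h x ≤ h y := by
  have hlim : Tendsto (fun t ↦ w t * h x) l (𝓝 (h x)) := by
    simpa only [one_mul] using hw.mul_const (h x)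
  refine le_of_tendsto hlim ?_
  filter_upwards [hl, hwh] with t ht hle
  simpa only [lineMap_lineMap_inv_self x y ht] using hle x (lineMap x y t⁻¹)

end Extrapolation

theorem tendsto_one_sub_rpow_nhds_zero (p : ℝ) :
    Tendsto (fun t : ℝ ↦ (1 - t) ^ p) (𝓝 0) (𝓝 1) := by
  have hcont : ContinuousAt (fun t : ℝ ↦ (1 - t) ^ p) 0 :=
    ContinuousAt.rpow_const (by fun_prop) (Or.inl (by norm_num))
  simpa only [sub_zero, Real.one_rpow] using hcont.tendsto

theorem mcp_zero_density_on_line_constant_general {V P : Type*} [AddCommGroup V] [Module ℝ V]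
    [AddTorsor V P] (N : ℝ) (h : P → ℝ)
    (hmcp : ∀ x₀ x₁ : P, ∀ t ∈ Ioo (0 : ℝ) 1,
      (1 - t) ^ (N - 1) * h x₀ ≤ h (lineMap x₀ x₁ t)) (x y : P) :
    h x = h y := by
  have hw : Tendsto (fun t : ℝ ↦ (1 - t) ^ (N - 1)) (𝓝[>] 0) (𝓝 1) :=
    (tendsto_one_sub_rpow_nhds_zero (N - 1)).mono_left nhdsWithin_le_nhds
  have hne : ∀ᶠ t : ℝ in 𝓝[>] 0, t ≠ 0 :=
    eventually_mem_nhdsWithin.mono fun _ ht ↦ ne_of_gt ht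
  have hle : ∀ᶠ t : ℝ in 𝓝[>] 0, ∀ x₀ x₁ : P,
      (1 - t) ^ (N - 1) * h x₀ ≤ h (lineMap x₀ x₁ t) := by
    filter_upwards [Ioo_mem_nhdsGT zero_lt_one] with t ht x₀ x₁ using hmcp x₀ x₁ t ht
  exact le_antisymm (le_of_eventually_mul_le_lineMap hne hw hle x y)
    (le_of_eventually_mul_le_lineMap hne hw hle y x)

theorem mcp_zero_density_on_line_constant (N : ℝ) (hN : 1 < N)
    (h : ℝ → ℝ) (hnonneg : ∀ x : ℝ, 0 ≤ h x)
    (hmcp : ∀ x₀ x₁ : ℝ, ∀ t ∈ Set.Icc (0:ℝ) 1,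
      (1 - t) ^ (N - 1) * h x₀ ≤ h (t * x₁ + (1 - t) * x₀)) :
    ∀ x y : ℝ, h x = h y :=
  mcp_zero_density_on_line_constant_general N h fun x₀ x₁ t ht ↦ by
    simpa only [lineMap_apply_ring, add_comm] using hmcp x₀ x₁ t (Ioo_subset_Icc_self ht)
end

section
/- Let N ∈ (1,∞), a ∈ ℝ, and let h : [a,∞) → [0,∞) satisfy h(t·x₁ + (1−t)·x₀) ≥ (1−t)^{N−1}·h(x₀) for all x₀, x₁ ∈ [a,∞) and all t ∈ [0,1] (i.e. h is an MCP(0,N) density on the half-line [a,∞)). Then h is non-decreasing: h(x₀) ≤ h(x₁) whenever a ≤ x₀ ≤ x₁. -/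
/-!
To compare `h x₀` with `h x₁`, reach `x₁` as the point at a small time `t` on the segment from `x₀`
to the far point `x₀ + (x₁ - x₀) / t`, which exists because the half-line is unbounded on the right.
The interpolation inequality gives `(1 - t) ^ (N - 1) * h x₀ ≤ h x₁`, and the distortion factor
tends to `1` as `t` decreases to `0`.
-/

open Set Filter Topology AffineMap

theorem lineMap_lineMap_inv {𝕜 V P : Type*} [Field 𝕜] [AddCommGroup V] [Module 𝕜 V]
    [AddTorsor V P] (x z : P) {t : 𝕜} (ht : t ≠ 0) : lineMap x (lineMap x z t⁻¹) t = z := by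
  rw [lineMap_lineMap_right, mul_inv_cancel₀ ht, lineMap_apply_one]

theorem le_of_tendsto_one_of_eventually_mul_le {α : Type*} {l : Filter α} [l.NeBot] {w : α → ℝ}
    {b c : ℝ} (hw : Tendsto w l (𝓝 1)) (hle : ∀ᶠ t in l, w t * b ≤ c) : b ≤ c :=
  le_of_tendsto (by simpa only [one_mul] using hw.mul_const b) hle

theorem tendsto_one_sub_rpow_nhdsGT_zero (p : ℝ) :
    Tendsto (fun t : ℝ ↦ (1 - t) ^ p) (𝓝[>] 0) (𝓝 1) := by
  have hcont : ContinuousAt (fun t : ℝ ↦ (1 - t) ^ p) 0 :=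
    ContinuousAt.rpow_const (by fun_prop) (Or.inl (by norm_num))
  simpa only [sub_zero, Real.one_rpow] using hcont.tendsto.mono_left nhdsWithin_le_nhds

theorem le_of_forall_mul_le_lineMap_of_ray_subset {V P : Type*} [AddCommGroup V] [Module ℝ V]
    [AddTorsor V P] {s : Set P} {f : P → ℝ} {w : ℝ → ℝ} {x z : P}
    (hw : Tendsto w (𝓝[>] 0) (𝓝 1))
    (hf : ∀ y ∈ s, ∀ t ∈ Ioo (0 : ℝ) 1, w t * f x ≤ f (lineMap x y t))
    (hray : ∀ r : ℝ, 1 < r → lineMap x z r ∈ s) : f x ≤ f z := by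
  refine le_of_tendsto_one_of_eventually_mul_le hw ?_
  filter_upwards [Ioo_mem_nhdsGT one_pos] with t ht
  have hfar : lineMap x z t⁻¹ ∈ s := hray t⁻¹ ((one_lt_inv₀ ht.1).2 ht.2)
  simpa only [lineMap_lineMap_inv x z ht.1.ne'] using hf _ hfar t ht

theorem mcp_zero_density_on_halfline_monotone_general {E : Type*} [AddCommGroup E]
    [PartialOrder E] [IsOrderedAddMonoid E] [Module ℝ E] [PosSMulMono ℝ E] {s : Set E}
    {f : E → ℝ} {w : ℝ → ℝ} (hs : IsUpperSet s) (hw : Tendsto w (𝓝[>] 0) (𝓝 1))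
    (hf : ∀ x ∈ s, ∀ y ∈ s, ∀ t ∈ Ioo (0 : ℝ) 1, w t * f x ≤ f (lineMap x y t)) :
    MonotoneOn f s := by
  intro x hx z _ hxz
  refine le_of_forall_mul_le_lineMap_of_ray_subset hw (hf x hx) fun r hr ↦ ?_
  have hle : x ≤ lineMap x z r := by
    rw [lineMap_apply_module']
    exact le_add_of_nonneg_left (smul_nonneg (zero_le_one.trans hr.le) (sub_nonneg.2 hxz))
  exact hs hle hx

theorem mcp_zero_density_on_halfline_monotone (N a : ℝ) (hN : 1 < N)
    (h : ℝ → ℝ) (hnonneg : ∀ x ∈ Set.Ici a, 0 ≤ h x)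
    (hmcp : ∀ x₀ ∈ Set.Ici a, ∀ x₁ ∈ Set.Ici a, ∀ t ∈ Set.Icc (0:ℝ) 1,
      (1 - t) ^ (N - 1) * h x₀ ≤ h (t * x₁ + (1 - t) * x₀)) :
    ∀ x₀ x₁ : ℝ, a ≤ x₀ → x₀ ≤ x₁ → h x₀ ≤ h x₁ := by
  have hmono : MonotoneOn h (Ici a) := mcp_zero_density_on_halfline_monotone_general
    (isUpperSet_Ici a) (tendsto_one_sub_rpow_nhdsGT_zero (N - 1)) fun x hx y hy t ht ↦ by
      simpa only [lineMap_apply_ring, add_comm] using hmcp x hx y hy t (Ioo_subset_Icc_self ht)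
  exact fun x₀ x₁ hx₀ hx₀₁ ↦ hmono hx₀ (hx₀.trans hx₀₁) hx₀₁
end

section
/- Let K > 0, N ∈ (1,∞), and let a < b be real numbers with b − a = π·√((N−1)/K). Let h be an MCP(K,N) density on (a,b) such that h(x₀) > 0 for some x₀ ∈ (a,b). Then there exists a constant c > 0 such that h(x) = c·(sin(√(K/(N−1))·(x − a)))^{N−1} for all x ∈ (a,b). -/
open Real MeasureTheory ENNReal

/-!
Write `κ = K / (N - 1)`. Contracting towards a point `z`, the MCP inequality says that
`h / sin(√κ · dist(·, z))^(N-1)` does not decrease as one moves towards `z`. On an interval of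
maximal length `π / √κ` one may let `z` tend to either endpoint, and both limiting weights are the
same function, because `sin(√κ (x - a)) = sin(√κ (b - x))`. So the quotient of `h` by this common
weight is monotone in both directions, hence constant.
-/

theorem mul_pi_sq_le_mul_sq_iff {K n θ : ℝ} (hK : 0 ≤ K) (hn : 0 < n) (hθ : 0 ≤ θ) :
    n * π ^ 2 ≤ K * θ ^ 2 ↔ π ≤ √(K / n) * θ := by
  rw [← sq_le_sq₀ pi_nonneg (by positivity), mul_pow, sq_sqrt (by positivity),
    div_mul_eq_mul_div, le_div_iff₀' hn]

theorem sqrt_div_mul_eq_pi {K n d : ℝ} (hK : 0 < K) (hn : 0 < n)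
    (hd : d = π * √(n / K)) : √(K / n) * d = π := by
  rw [hd, mul_left_comm, ← sqrt_mul (by positivity), div_mul_div_cancel₀ hn.ne', div_self hK.ne',
    sqrt_one, mul_one]

/-- The density, up to a constant, of the one-dimensional model space for `MCP(K,N)` with `K > 0`,
as a function of the distance `r` to an endpoint. It is the model only while `√(K/(N-1)) * r`
lies in `[0, π]`; elsewhere the sine may be negative and `rpow` takes junk values. -/
noncomputable def modelDensity (K N r : ℝ) : ℝ := sin (√(K / (N - 1)) * r) ^ (N - 1)

section modelDensity

variable {K N r s : ℝ}

theorem continuous_modelDensity (hN : 1 ≤ N) : Continuous (modelDensity K N) :=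
  Continuous.rpow_const (by fun_prop) fun _ ↦ Or.inr (sub_nonneg.2 hN)

theorem modelDensity_nonneg (hr₀ : 0 ≤ r) (hr : √(K / (N - 1)) * r ≤ π) :
    0 ≤ modelDensity K N r :=
  rpow_nonneg (sin_nonneg_of_nonneg_of_le_pi (by positivity) hr) _

theorem modelDensity_pos (hr₀ : 0 < √(K / (N - 1)) * r) (hr : √(K / (N - 1)) * r < π) :
    0 < modelDensity K N r :=
  rpow_pos_of_pos (sin_pos_of_pos_of_lt_pi hr₀ hr) _

theorem modelDensity_eq_of_add (hrs : √(K / (N - 1)) * (r + s) = π) :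
    modelDensity K N r = modelDensity K N s := by
  rw [modelDensity, modelDensity, ← sin_pi_sub, ← hrs, mul_add, add_sub_cancel_left]

theorem sigmaE_rpow_eq_modelDensity_div {t θ : ℝ} (hK : 0 < K) (hN : 1 < N)
    (ht : t ∈ Set.Icc (0 : ℝ) 1) (hθ₀ : 0 < θ) (hθ : √(K / (N - 1)) * θ < π) :
    sigmaE K (N - 1) t θ ^ (N - 1) =
      ENNReal.ofReal (modelDensity K N (t * θ) / modelDensity K N θ) := by
  have hN' : 0 < N - 1 := sub_pos.2 hN
  have hfinite : ¬ (N - 1) * π ^ 2 ≤ K * θ ^ 2 := by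
    rwa [mul_pi_sq_le_mul_sq_iff hK.le hN' hθ₀.le, not_le]
  have hsin : 0 ≤ sin (√(K / (N - 1)) * θ) :=
    sin_nonneg_of_nonneg_of_le_pi (by positivity) hθ.le
  have hsin' : 0 ≤ sin (√(K / (N - 1)) * (t * θ)) := by
    have htθ : t * θ ≤ θ := mul_le_of_le_one_left hθ₀.le ht.2
    exact sin_nonneg_of_nonneg_of_le_pi (mul_nonneg (sqrt_nonneg _) (mul_nonneg ht.1 hθ₀.le))
      ((mul_le_mul_of_nonneg_left htθ (sqrt_nonneg _)).trans hθ.le)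
  rw [sigmaE, if_neg hfinite, sigmaR, if_pos (by positivity), mul_comm (t * θ), mul_comm θ,
    ENNReal.ofReal_rpow_of_nonneg (div_nonneg hsin' hsin) hN'.le, div_rpow hsin' hsin]
  rfl

end modelDensity

namespace IsMCPDensity

variable {K N x y z : ℝ} {I : Set ℝ} {h : ℝ → ℝ}

theorem eq_zero_of_pi_le (hh : IsMCPDensity K N I h) (hK : 0 ≤ K) (hN : 1 < N) (hy : y ∈ I)
    (hz : z ∈ I) (hyz : π ≤ √(K / (N - 1)) * dist y z) : h y = 0 := by
  have hN' : 0 < N - 1 := sub_pos.2 hN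
  have hcontract := hh.2 y hy z hz 0 (by simp)
  rw [← Real.dist_eq, dist_comm, sigmaE,
    if_pos ((mul_pi_sq_le_mul_sq_iff hK hN' dist_nonneg).2 hyz), top_rpow_of_pos hN'] at hcontract
  by_contra hne
  have hpos : 0 < h y := (hh.1 y hy).lt_of_ne' hne
  rw [top_mul (by simpa using hpos), top_le_iff] at hcontract
  exact ofReal_ne_top hcontract

theorem modelDensity_dist_mul_le (hh : IsMCPDensity K N I h) (hK : 0 < K) (hN : 1 < N)
    (hy : y ∈ I) (hx : x ∈ I) (hz : z ∈ I) (hyxz : Wbtw ℝ y x z)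
    (hyz : √(K / (N - 1)) * dist y z ≤ π) :
    modelDensity K N (dist x z) * h y ≤ modelDensity K N (dist y z) * h x := by
  rcases hyz.eq_or_lt with hyz_eq | hyz_lt
  · rw [hh.eq_zero_of_pi_le hK.le hN hy hz hyz_eq.ge, mul_zero]
    exact mul_nonneg (modelDensity_nonneg dist_nonneg hyz) (hh.1 x hx)
  rcases eq_or_ne y z with rfl | hne
  · rw [(wbtw_self_iff ℝ).1 hyxz]
  obtain ⟨t, ht, rfl⟩ := hyxz
  have hdist : dist (AffineMap.lineMap y z t) z = (1 - t) * dist y z := by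
    rw [dist_lineMap_right, norm_of_nonneg (sub_nonneg.2 ht.2)]
  have hmodel : 0 < modelDensity K N (dist y z) :=
    modelDensity_pos (mul_pos (sqrt_pos.2 (div_pos hK (sub_pos.2 hN))) (dist_pos.2 hne)) hyz_lt
  have hpoint : t * z + (1 - t) * y = AffineMap.lineMap y z t := by
    rw [AffineMap.lineMap_apply_module, smul_eq_mul, smul_eq_mul, add_comm]
  have hcontract := hh.2 y hy z hz t ht
  rw [hpoint, ← Real.dist_eq, dist_comm z y,
    sigmaE_rpow_eq_modelDensity_div hK hN (Set.Icc.mem_iff_one_sub_mem.1 ht) (dist_pos.2 hne)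
      hyz_lt,
    ← ofReal_mul' (hh.1 y hy), ofReal_le_ofReal_iff (hh.1 _ hx), div_mul_eq_mul_div,
    div_le_iff₀' hmodel] at hcontract
  rwa [hdist]

theorem modelDensity_dist_mul_le_of_openSegment_subset (hh : IsMCPDensity K N I h) (hK : 0 < K)
    (hN : 1 < N) (hy : y ∈ I) (hx : x ∈ I) (hxz : openSegment ℝ x z ⊆ I) (hyxz : Wbtw ℝ y x z)
    (hyz : √(K / (N - 1)) * dist y z ≤ π) :
    modelDensity K N (dist x z) * h y ≤ modelDensity K N (dist y z) * h x := by
  let S : Set ℝ := {w | modelDensity K N (dist x w) * h y ≤ modelDensity K N (dist y w) * h x}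
  have hcont (u c : ℝ) : Continuous fun w ↦ modelDensity K N (dist u w) * c :=
    ((continuous_modelDensity hN.le).comp (by fun_prop)).mul_const c
  have hclosed : IsClosed S := isClosed_le (hcont x (h y)) (hcont y (h x))
  have hsub : openSegment ℝ x z ⊆ S := by
    intro w hw
    have hxwz : Wbtw ℝ x w z := mem_segment_iff_wbtw.1 (openSegment_subset_segment ℝ x z hw)
    have hdist : dist y w ≤ dist y z := by
      linarith [(hyxz.trans_right hxwz).dist_add_dist, dist_nonneg (x := w) (y := z)]
    exact hh.modelDensity_dist_mul_le hK hN hy hx (hxz hw) (hyxz.trans_right_left hxwz)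
      ((mul_le_mul_of_nonneg_left hdist (sqrt_nonneg _)).trans hyz)
  apply hclosed.closure_subset_iff.2 hsub
  rw [closure_openSegment]
  exact right_mem_segment ℝ x z

theorem modelDensity_sub_mul_le {a b : ℝ} (hh : IsMCPDensity K N (Set.Ioo a b) h) (hK : 0 < K)
    (hN : 1 < N) (hab : √(K / (N - 1)) * (b - a) = π) (hy : y ∈ Set.Ioo a b)
    (hx : x ∈ Set.Ioo a b) :
    modelDensity K N (x - a) * h y ≤ modelDensity K N (y - a) * h x := by
  have hlength {r : ℝ} (hr : r ≤ b - a) : √(K / (N - 1)) * r ≤ π :=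
    hab ▸ mul_le_mul_of_nonneg_left hr (sqrt_nonneg _)
  have hleft {u : ℝ} (hu : u ∈ Set.Ioo a b) : dist u a = u - a := by
    rw [Real.dist_eq, abs_of_pos (sub_pos.2 hu.1)]
  have hright {u : ℝ} (hu : u ∈ Set.Ioo a b) : dist u b = b - u := by
    rw [dist_comm, Real.dist_eq, abs_of_pos (sub_pos.2 hu.2)]
  have hreflect (u : ℝ) : modelDensity K N (u - a) = modelDensity K N (b - u) :=
    modelDensity_eq_of_add (by rw [← hab]; ring)
  rcases le_total y x with hyx | hxy
  · have hsub : openSegment ℝ x b ⊆ Set.Ioo a b :=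
      (openSegment_subset_Ioo hx.2).trans (Set.Ioo_subset_Ioo_left hx.1.le)
    have hbtw : Wbtw ℝ y x b := mem_segment_iff_wbtw.1 (Icc_subset_segment ⟨hyx, hx.2.le⟩)
    rw [hreflect, hreflect, ← hright hx, ← hright hy]
    exact hh.modelDensity_dist_mul_le_of_openSegment_subset hK hN hy hx hsub hbtw
      (hlength (by rw [hright hy]; linarith [hy.1]))
  · have hsub : openSegment ℝ x a ⊆ Set.Ioo a b := by
      rw [openSegment_symm]
      exact (openSegment_subset_Ioo hx.1).trans (Set.Ioo_subset_Ioo_right hx.2.le)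
    have hbtw : Wbtw ℝ y x a :=
      (mem_segment_iff_wbtw.1 (Icc_subset_segment ⟨hx.1.le, hxy⟩)).symm
    rw [← hleft hx, ← hleft hy]
    exact hh.modelDensity_dist_mul_le_of_openSegment_subset hK hN hy hx hsub hbtw
      (hlength (by rw [hleft hy]; linarith [hy.2]))

end IsMCPDensity

theorem mcp_density_maximal_diameter_rigidity (K N a b : ℝ) (hK : 0 < K) (hN : 1 < N)
    (hab : a < b) (hdiam : b - a = Real.pi * Real.sqrt ((N - 1) / K))
    (h : ℝ → ℝ) (hh : IsMCPDensity K N (Set.Ioo a b) h)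
    (x₀ : ℝ) (hx₀ : x₀ ∈ Set.Ioo a b) (hpos : 0 < h x₀) :
    ∃ c > (0:ℝ), ∀ x ∈ Set.Ioo a b,
      h x = c * Real.sin (Real.sqrt (K / (N - 1)) * (x - a)) ^ (N - 1) := by
  have hlength : √(K / (N - 1)) * (b - a) = π :=
    sqrt_div_mul_eq_pi hK (sub_pos.2 hN) hdiam
  have hsqrt : 0 < √(K / (N - 1)) := sqrt_pos.2 (div_pos hK (sub_pos.2 hN))
  have hmodel : 0 < modelDensity K N (x₀ - a) :=
    modelDensity_pos (mul_pos hsqrt (sub_pos.2 hx₀.1))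
      (hlength ▸ mul_lt_mul_of_pos_left (sub_lt_sub_right hx₀.2 a) hsqrt)
  refine ⟨h x₀ / modelDensity K N (x₀ - a), div_pos hpos hmodel, fun x hx ↦ ?_⟩
  have hcross : modelDensity K N (x₀ - a) * h x = modelDensity K N (x - a) * h x₀ :=
    (hh.modelDensity_sub_mul_le hK hN hlength hx hx₀).antisymm
      (hh.modelDensity_sub_mul_le hK hN hlength hx₀ hx)
  change h x = h x₀ / modelDensity K N (x₀ - a) * modelDensity K N (x - a)
  rw [div_mul_eq_mul_div, eq_div_iff hmodel.ne', mul_comm (h x), hcross, mul_comm]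
end

section
/- Let (X,d) be a proper geodesic metric space containing a line γ : ℝ → X, and let b⁺(x) := lim_{t → +∞} (d(x, γ(t)) − t) be the associated Busemann function. Then for every x ∈ X and every s > 0 there exists y ∈ X with d(x,y) = s and b⁺(x) − b⁺(y) = s. In particular, every point of X belongs to the transport set T_{b⁺} = {x ∈ X : ∃ y ≠ x with |b⁺(x) − b⁺(y)| = d(x,y)}, i.e. T_{b⁺} = X. -/
/-!
Walk distance `s` from `x` along a geodesic towards the far away point `γ t`, arriving at `y t`, so
that `dist x (γ t) - dist (y t) (γ t) = s`. By properness the points `y t` accumulate at some `z`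
as `t → ∞`, and the equality passes to the limit since the distance functions are uniformly
`1`-Lipschitz. The same works for any horofunction centred at infinity.
-/

open Filter Set Topology

section Horofunction

variable {ι X : Type*} [PseudoMetricSpace X]

/-- `c`, restricted to `[0, 1]`, is a geodesic from `x` to `y` parametrised proportionally to arc
length. The values of `c` outside `[0, 1]` are irrelevant. -/
def IsGeodesicBetween (c : ℝ → X) (x y : X) : Prop :=
  c 0 = x ∧ c 1 = y ∧ ∀ s ∈ Icc (0 : ℝ) 1, ∀ t ∈ Icc (0 : ℝ) 1,
    dist (c s) (c t) = |s - t| * dist x y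

/-- `b` is the pointwise limit along `l` of the distance functions to the points `p i`, each
renormalised by the constant `a i`. The Busemann function of a line `γ` is the case `p = γ`,
`a = id`, `l = atTop`. The divergence of `a`, which places the limit of `p` at infinity, is not part
of the definition. -/
def IsHorofunctionAlong (l : Filter ι) (p : ι → X) (a : ι → ℝ) (b : X → ℝ) : Prop :=
  ∀ x, Tendsto (fun i => dist x (p i) - a i) l (𝓝 (b x))

theorem IsGeodesicBetween.exists_dist_eq {c : ℝ → X} {x y : X} (hc : IsGeodesicBetween c x y)
    {s : ℝ} (hs : s ∈ Icc 0 (dist x y)) :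
    ∃ z, dist x z = s ∧ dist z y = dist x y - s := by
  obtain ⟨hc_zero, hc_one, hc_dist⟩ := hc
  obtain ⟨hs_nonneg, hs_le⟩ := hs
  have hr_mem : s / dist x y ∈ Icc (0 : ℝ) 1 :=
    ⟨div_nonneg hs_nonneg dist_nonneg, div_le_one_of_le₀ hs_le dist_nonneg⟩
  have hr_mul : s / dist x y * dist x y = s :=
    div_mul_cancel_of_imp fun hxy => le_antisymm (hxy ▸ hs_le) hs_nonneg
  refine ⟨c (s / dist x y), ?_, ?_⟩
  · calc dist x (c (s / dist x y))
        = |0 - s / dist x y| * dist x y := by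
          rw [← hc_dist 0 (left_mem_Icc.2 zero_le_one) _ hr_mem, hc_zero]
      _ = s := by rw [zero_sub, abs_neg, abs_of_nonneg hr_mem.1, hr_mul]
  · calc dist (c (s / dist x y)) y
        = |s / dist x y - 1| * dist x y := by
          rw [← hc_dist _ hr_mem 1 (right_mem_Icc.2 zero_le_one), hc_one]
      _ = dist x y - s := by
          rw [abs_sub_comm, abs_of_nonneg (sub_nonneg.2 hr_mem.2), sub_mul, one_mul, hr_mul]

namespace IsHorofunctionAlong

variable {l : Filter ι} {p : ι → X} {a : ι → ℝ} {b : X → ℝ}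

theorem mono {l' : Filter ι} (hb : IsHorofunctionAlong l p a b) (hl : l' ≤ l) :
    IsHorofunctionAlong l' p a b :=
  fun x => (hb x).mono_left hl

theorem tendsto_dist_sub_dist (hb : IsHorofunctionAlong l p a b) (x y : X) :
    Tendsto (fun i => dist x (p i) - dist y (p i)) l (𝓝 (b x - b y)) := by
  simpa only [sub_sub_sub_cancel_right] using (hb x).sub (hb y)

theorem sub_le_dist [l.NeBot] (hb : IsHorofunctionAlong l p a b) (x y : X) :
    b x - b y ≤ dist x y :=
  le_of_tendsto' (hb.tendsto_dist_sub_dist x y) fun i =>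
    sub_le_iff_le_add.2 (dist_triangle x y (p i))

theorem tendsto_dist_atTop (hb : IsHorofunctionAlong l p a b) (ha : Tendsto a l atTop) (x : X) :
    Tendsto (fun i => dist x (p i)) l atTop := by
  simpa only [sub_add_cancel] using (hb x).add_atTop ha

theorem dist_eq_and_sub_eq_of_tendsto [l.NeBot] (hb : IsHorofunctionAlong l p a b)
    {x z : X} {s : ℝ} {y : ι → X} (hy_dist : ∀ᶠ i in l, dist x (y i) = s)
    (hy_between : ∀ᶠ i in l, dist (y i) (p i) = dist x (p i) - s) (hyz : Tendsto y l (𝓝 z)) :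
    dist x z = s ∧ b x - b z = s := by
  have hxz : dist x z = s :=
    tendsto_nhds_unique_of_eventuallyEq (tendsto_const_nhds.dist hyz) tendsto_const_nhds hy_dist
  have h_lower : Tendsto (fun i => s - dist z (y i)) l (𝓝 s) := by
    simpa only [dist_self, sub_zero] using
      (tendsto_const_nhds (x := s)).sub ((tendsto_const_nhds (x := z)).dist hyz)
  refine ⟨hxz, le_antisymm (hxz ▸ hb.sub_le_dist x z) ?_⟩
  refine le_of_tendsto_of_tendsto h_lower (hb.tendsto_dist_sub_dist x z) ?_
  filter_upwards [hy_between] with i hi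
  linarith [dist_triangle z (y i) (p i)]

theorem exists_dist_eq_and_sub_eq [l.NeBot] [ProperSpace X] (hb : IsHorofunctionAlong l p a b)
    {x : X} {s : ℝ}
    (h_between : ∀ᶠ i in l, ∃ y, dist x y = s ∧ dist y (p i) = dist x (p i) - s) :
    ∃ z, dist x z = s ∧ b x - b z = s := by
  have : Nonempty X := ⟨x⟩
  obtain ⟨y, hy⟩ := h_between.choice
  have hUl : (Ultrafilter.of l : Filter ι) ≤ l := Ultrafilter.of_le l
  have hyU := hy.filter_mono hUl
  have hy_sphere : ((Ultrafilter.of l).map y : Filter X) ≤ 𝓟 (Metric.sphere x s) :=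
    tendsto_principal.2 <| hyU.mono fun i hi => Metric.mem_sphere'.2 hi.1
  obtain ⟨z, -, hyz⟩ := (isCompact_sphere x s).ultrafilter_le_nhds _ hy_sphere
  exact ⟨z, (hb.mono hUl).dist_eq_and_sub_eq_of_tendsto (hyU.mono fun _ h => h.1)
    (hyU.mono fun _ h => h.2) hyz⟩

end IsHorofunctionAlong

theorem busemann_transport_set_is_everything_general [ProperSpace X]
    (hgeodesic : ∀ x y : X, ∃ c, IsGeodesicBetween c x y)
    {l : Filter ι} [l.NeBot] {p : ι → X} {a : ι → ℝ} {b : X → ℝ}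
    (ha : Tendsto a l atTop) (hb : IsHorofunctionAlong l p a b) :
    (∀ x : X, ∀ s : ℝ, 0 < s → ∃ y : X, dist x y = s ∧ b x - b y = s) ∧
    ∀ x : X, ∃ y : X, y ≠ x ∧ |b x - b y| = dist x y := by
  have h_descent (x : X) (s : ℝ) (hs : 0 < s) : ∃ y, dist x y = s ∧ b x - b y = s := by
    apply hb.exists_dist_eq_and_sub_eq
    filter_upwards [(hb.tendsto_dist_atTop ha x).eventually_ge_atTop s] with i hi
    obtain ⟨c, hc⟩ := hgeodesic x (p i)
    exact hc.exists_dist_eq ⟨hs.le, hi⟩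
  refine ⟨h_descent, fun x => ?_⟩
  obtain ⟨y, hxy, hb_sub⟩ := h_descent x 1 one_pos
  refine ⟨y, ?_, by rw [hb_sub, hxy, abs_one]⟩
  rintro rfl
  exact zero_ne_one ((dist_self y).symm.trans hxy)

end Horofunction

theorem busemann_transport_set_is_everything {X : Type*} [MetricSpace X] [ProperSpace X]
    (hgeodesic : ∀ x y : X, ∃ c : ℝ → X, c 0 = x ∧ c 1 = y ∧
      ∀ s ∈ Set.Icc (0:ℝ) 1, ∀ t ∈ Set.Icc (0:ℝ) 1,
        dist (c s) (c t) = |s - t| * dist x y)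
    (γ : ℝ → X) (hγ : ∀ s t : ℝ, dist (γ s) (γ t) = |s - t|)
    (B : X → ℝ)
    (hB : ∀ x : X,
      Filter.Tendsto (fun t => dist x (γ t) - t) Filter.atTop (nhds (B x))) :
    (∀ x : X, ∀ s : ℝ, 0 < s → ∃ y : X, dist x y = s ∧ B x - B y = s) ∧
    ∀ x : X, ∃ y : X, y ≠ x ∧ |B x - B y| = dist x y :=
  busemann_transport_set_is_everything_general hgeodesic tendsto_id hB
end
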